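/- arXiv:1901.06155 — 3 statements merged into one kernel-verified Lean document; each statement's English description precedes it below -/
import Mathlib

section
/- The hexagon F admits the Minkowski decomposition into two lattice triangles: F equals the Minkowski sum conv{(0,0),(-1,0),(-1,-1)} + conv{(0,0),(1,0),(1,1)}, where the Minkowski sum of subsets A, B of ℝ² is {a + b | a ∈ A, b ∈ B}. -/
open Pointwise

/-- The hexagon `F`, the convex hull of six lattice points in `ℝ²`. -/
noncomputable def hexagonF : Set (ℝ × ℝ) :=
  convexHull ℝ {(1, 0), (1, 1), (0, 1), (-1, 0), (-1, -1), (0, -1)}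

/-!
The two triangles are `-T` and `T` for `T = conv {0, u, u + v}` with `u = (1, 0)` and `v = (0, 1)`,
so their Minkowski sum is the difference body `T - T`. Taking convex hulls commutes with Minkowski
subtraction, so `T - T` is the hull of the pairwise differences of the vertices of `T`. These are
the six vertices of `F` together with `0`, and `0` is redundant, being the midpoint of opposite
vertices.
-/

theorem triple_sub_triple_self {G : Type*} [AddGroup G] (a b c : G) :
    ({a, b, c} : Set G) - {a, b, c} = {0, b - a, c - a, c - b, a - b, a - c, b - c} := by
  simp_rw [Set.insert_eq, Set.union_sub, Set.sub_union, Set.singleton_sub_singleton, sub_self]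
  grind

theorem convexHull_insert_of_mem_convexHull {𝕜 E : Type*} [Semiring 𝕜] [PartialOrder 𝕜]
    [AddCommMonoid E] [Module 𝕜 E] {s : Set E} {x : E} (hx : x ∈ convexHull 𝕜 s) :
    convexHull 𝕜 (insert x s) = convexHull 𝕜 s :=
  (convexHull_min (Set.insert_subset hx (subset_convexHull 𝕜 s)) (convex_convexHull 𝕜 s)).antisymm
    (convexHull_mono (Set.subset_insert x s))

theorem zero_mem_convexHull_of_mem_of_neg_mem {𝕜 E : Type*} [Ring 𝕜] [LinearOrder 𝕜]
    [IsStrictOrderedRing 𝕜] [Invertible (2 : 𝕜)] [AddCommGroup E] [Module 𝕜 E] {s : Set E} {x : E}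
    (hx : x ∈ s) (hneg : -x ∈ s) : 0 ∈ convexHull 𝕜 s := by
  rw [← midpoint_self_neg 𝕜 x]
  exact (convex_convexHull 𝕜 s).midpoint_mem (subset_convexHull 𝕜 s hx)
    (subset_convexHull 𝕜 s hneg)

section Triangle

variable {𝕜 E : Type*} [Field 𝕜] [LinearOrder 𝕜] [IsStrictOrderedRing 𝕜] [AddCommGroup E]
  [Module 𝕜 E]

theorem convexHull_triple_sub_self (a b c : E) :
    convexHull 𝕜 {a, b, c} - convexHull 𝕜 {a, b, c} =
      convexHull 𝕜 {b - a, c - a, c - b, a - b, a - c, b - c} := by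
  rw [← convexHull_sub, triple_sub_triple_self]
  exact convexHull_insert_of_mem_convexHull
    (zero_mem_convexHull_of_mem_of_neg_mem (x := b - a) (by simp) (by simp))

theorem hexagon_minkowski_two_triangles_general (u v : E) :
    convexHull 𝕜 {u, u + v, v, -u, -(u + v), -v} =
      convexHull 𝕜 {0, -u, -(u + v)} + convexHull 𝕜 {0, u, u + v} := by
  have neg_triangle : convexHull 𝕜 {0, -u, -(u + v)} = -convexHull 𝕜 {0, u, u + v} := by
    simp only [← convexHull_neg, Set.neg_insert, Set.neg_singleton, neg_zero]
  rw [neg_triangle, neg_add_eq_sub, convexHull_triple_sub_self]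
  simp only [sub_zero, zero_sub, add_sub_cancel_left, sub_add_cancel_left]

end Triangle

/-- The hexagon `F` is the Minkowski sum of the two lattice triangles
`conv{(0,0),(-1,0),(-1,-1)}` and `conv{(0,0),(1,0),(1,1)}`. -/
theorem hexagon_minkowski_two_triangles :
    hexagonF =
      convexHull ℝ {((0 : ℝ), (0 : ℝ)), (-1, 0), (-1, -1)} +
        convexHull ℝ {((0 : ℝ), (0 : ℝ)), (1, 0), (1, 1)} := by
  simpa [hexagonF, Prod.mk_zero_zero] using
    hexagon_minkowski_two_triangles_general (𝕜 := ℝ) ((1, 0) : ℝ × ℝ) (0, 1)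
end

section
/- The set of lattice points of the polytope P, i.e., the set of points of ℤ³ lying in P, consists of exactly the nine points (1,0,1), (1,1,1), (0,1,1), (-1,0,1), (-1,-1,1), (0,-1,1), (0,0,-1), (0,0,1), and (0,0,0). -/
/-!
Let `N (x, y) = max(|x|, |y|, |x - y|)` be the norm on the plane whose unit ball is the hexagon `F`.
The convex function `(x, y, z) ↦ 2 N (x, y) - z` equals `1` at all seven vertices of `P`, hence is
at most `1` on `P`; together with `z ≤ 1` this confines an integral point of `P` to the heights
`-1, 0, 1`. Since `N` is integral on `ℤ²`, it vanishes there at heights `-1` and `0` and is at most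
`1` at height `1`, where the lattice points of `F` are its six vertices and its center. Conversely,
the two points `(0, 0, 1)` and `(0, 0, 0)` that are not vertices are successive midpoints of points
of `P`.
-/

noncomputable section

/-- The polytope `P ⊆ ℝ³`: the pyramid over the hexagon `F × {1}` with apex `(0,0,-1)`. -/
def polytopeP : Set (ℝ × ℝ × ℝ) :=
  convexHull ℝ {(1, 0, 1), (1, 1, 1), (0, 1, 1), (-1, 0, 1), (-1, -1, 1), (0, -1, 1),
    (0, 0, -1)}

/-- The inclusion of the lattice `ℤ³` into `ℝ³`. -/
def toReal3 (v : ℤ × ℤ × ℤ) : ℝ × ℝ × ℝ := ((v.1 : ℝ), (v.2.1 : ℝ), (v.2.2 : ℝ))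

/-- The norm whose unit ball is the hexagon `F`, each absolute value accounting for one pair of
opposite edges. The coefficient ring is arbitrary so that it applies to `ℤ²` as well as to `ℝ²`. -/
def hexagonNorm {R : Type*} [Ring R] [LinearOrder R] (v : R × R) : R :=
  max |v.1| (max |v.2| |v.1 - v.2|)

section OrderedRing

variable {R : Type*} [Ring R] [LinearOrder R]

theorem hexagonNorm_le_iff {v : R × R} {c : R} :
    hexagonNorm v ≤ c ↔ |v.1| ≤ c ∧ |v.2| ≤ c ∧ |v.1 - v.2| ≤ c := by
  simp only [hexagonNorm, max_le_iff]

variable [IsStrictOrderedRing R]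

theorem hexagonNorm_nonneg (v : R × R) : 0 ≤ hexagonNorm v :=
  (abs_nonneg v.1).trans (le_max_left _ _)

theorem hexagonNorm_nonpos_iff {v : R × R} : hexagonNorm v ≤ 0 ↔ v = 0 := by
  rw [hexagonNorm_le_iff, Prod.ext_iff]
  simp +contextual [abs_nonpos_iff]

theorem hexagonNorm_intCast (x y : ℤ) :
    hexagonNorm ((x : R), (y : R)) = (hexagonNorm (x, y) : ℤ) := by
  push_cast [hexagonNorm]
  rfl

end OrderedRing

theorem convexOn_abs_linearMap {𝕜 E : Type*} [Field 𝕜] [LinearOrder 𝕜] [IsStrictOrderedRing 𝕜]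
    [AddCommGroup E] [Module 𝕜 E] (f : E →ₗ[𝕜] 𝕜) : ConvexOn 𝕜 Set.univ fun v ↦ |f v| :=
  (f.convexOn convex_univ).sup ((-f).convexOn convex_univ)

theorem convexOn_hexagonNorm {𝕜 : Type*} [Field 𝕜] [LinearOrder 𝕜] [IsStrictOrderedRing 𝕜] :
    ConvexOn 𝕜 Set.univ (hexagonNorm : 𝕜 × 𝕜 → 𝕜) :=
  have hfst := convexOn_abs_linearMap (LinearMap.fst 𝕜 𝕜 𝕜)
  have hsnd := convexOn_abs_linearMap (LinearMap.snd 𝕜 𝕜 𝕜)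
  have hsub := convexOn_abs_linearMap (LinearMap.fst 𝕜 𝕜 𝕜 - LinearMap.snd 𝕜 𝕜 𝕜)
  hfst.sup (hsnd.sup hsub)

theorem int_hexagonNorm_le_one_iff {x y : ℤ} :
    hexagonNorm (x, y) ≤ 1 ↔ (x, y) ∈
      ({(1, 0), (1, 1), (0, 1), (-1, 0), (-1, -1), (0, -1), (0, 0)} : Set (ℤ × ℤ)) := by
  simp only [hexagonNorm_le_iff, abs_le, Set.mem_insert_iff, Set.mem_singleton_iff, Prod.mk.injEq]
  omega

namespace polytopeP

/-- The linear projection of `ℝ³` to the plane of the hexagon `F`. -/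
def baseProj : ℝ × ℝ × ℝ →ₗ[ℝ] ℝ × ℝ :=
  (LinearMap.fst ℝ ℝ (ℝ × ℝ)).prod (LinearMap.fst ℝ ℝ ℝ ∘ₗ LinearMap.snd ℝ ℝ (ℝ × ℝ))

/-- The coordinate along the axis of the pyramid, as a linear form: the base has height `1` and the
apex has height `-1`. -/
def height : ℝ × ℝ × ℝ →ₗ[ℝ] ℝ :=
  LinearMap.snd ℝ ℝ ℝ ∘ₗ LinearMap.snd ℝ ℝ (ℝ × ℝ)

theorem convexOn_two_mul_hexagonNorm_sub_height :
    ConvexOn ℝ Set.univ fun p ↦ 2 * hexagonNorm (baseProj p) - height p :=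
  have hnorm : ConvexOn ℝ Set.univ (hexagonNorm ∘ baseProj) :=
    (convexOn_hexagonNorm (𝕜 := ℝ)).comp_linearMap baseProj
  (hnorm.smul zero_le_two).sub (height.concaveOn convex_univ)

theorem height_le_one {p : ℝ × ℝ × ℝ} (hp : p ∈ polytopeP) : height p ≤ 1 := by
  obtain ⟨v, hv, hpv⟩ :=
    (height.convexOn convex_univ).exists_ge_of_mem_convexHull (Set.subset_univ _) hp
  refine hpv.trans ?_
  rcases hv with rfl | rfl | rfl | rfl | rfl | rfl | rfl <;> norm_num [height]

theorem two_mul_hexagonNorm_le {p : ℝ × ℝ × ℝ} (hp : p ∈ polytopeP) :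
    2 * hexagonNorm (baseProj p) ≤ height p + 1 := by
  obtain ⟨v, hv, hpv⟩ :=
    convexOn_two_mul_hexagonNorm_sub_height.exists_ge_of_mem_convexHull (Set.subset_univ _) hp
  have hvertex : 2 * hexagonNorm (baseProj v) - height v = 1 := by
    rcases hv with rfl | rfl | rfl | rfl | rfl | rfl | rfl <;>
      norm_num [baseProj, height, hexagonNorm]
  exact sub_le_iff_le_add'.mp (hpv.trans_eq hvertex)

theorem base_center_mem : (0, 0, 1) ∈ polytopeP := by
  have hmid : ((0, 0, 1) : ℝ × ℝ × ℝ) = midpoint ℝ (1, 0, 1) (-1, 0, 1) := by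
    norm_num [midpoint_eq_smul_add]
  rw [hmid]
  exact (convex_convexHull ℝ _).midpoint_mem (subset_convexHull ℝ _ (by simp))
    (subset_convexHull ℝ _ (by simp))

theorem zero_mem : (0, 0, 0) ∈ polytopeP := by
  have hmid : ((0, 0, 0) : ℝ × ℝ × ℝ) = midpoint ℝ (0, 0, 1) (0, 0, -1) := by
    norm_num [midpoint_eq_smul_add]
  rw [hmid]
  exact (convex_convexHull ℝ _).midpoint_mem base_center_mem (subset_convexHull ℝ _ (by simp))

theorem lattice_point_cases {x y z : ℤ} (h : toReal3 (x, y, z) ∈ polytopeP) :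
    z = 1 ∧ hexagonNorm (x, y) ≤ 1 ∨ (z = 0 ∨ z = -1) ∧ (x, y) = 0 := by
  have hz : z ≤ 1 := by
    have hz' : (z : ℝ) ≤ 1 := height_le_one h
    exact_mod_cast hz'
  have hN : 2 * hexagonNorm (x, y) ≤ z + 1 := by
    have hN' : 2 * hexagonNorm ((x : ℝ), (y : ℝ)) ≤ z + 1 := two_mul_hexagonNorm_le h
    rw [hexagonNorm_intCast] at hN'
    exact_mod_cast hN'
  have hN₀ : 0 ≤ hexagonNorm (x, y) := hexagonNorm_nonneg _
  rw [← hexagonNorm_nonpos_iff]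
  omega

end polytopeP

/-- The lattice points of `P` are exactly the nine points
`(1,0,1), (1,1,1), (0,1,1), (-1,0,1), (-1,-1,1), (0,-1,1), (0,0,-1), (0,0,1), (0,0,0)`. -/
theorem lattice_points_of_P :
    {v : ℤ × ℤ × ℤ | toReal3 v ∈ polytopeP} =
      {(1, 0, 1), (1, 1, 1), (0, 1, 1), (-1, 0, 1), (-1, -1, 1), (0, -1, 1), (0, 0, -1),
        (0, 0, 1), (0, 0, 0)} := by
  apply Set.Subset.antisymm
  · rintro ⟨x, y, z⟩ h
    rcases polytopeP.lattice_point_cases h with ⟨rfl, hN⟩ | ⟨rfl | rfl, hxy⟩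
    · rcases int_hexagonNorm_le_one_iff.mp hN with h | h | h | h | h | h | h <;>
        cases h <;> simp
    · cases hxy; simp
    · cases hxy; simp
  · rintro v (rfl | rfl | rfl | rfl | rfl | rfl | rfl | rfl | rfl)
    iterate 7 exact subset_convexHull ℝ _ (by simp [toReal3])
    · simpa [toReal3] using polytopeP.base_center_mem
    · simpa [toReal3] using polytopeP.zero_mem

end
end

section
/- For every natural number d, the constant term of f₂^(2d), i.e., the coefficient of the monomial x⁰y⁰z⁰ in the (2d)-th power of the Laurent polynomial f₂ = z(2 + x + xy + y + x⁻¹ + x⁻¹y⁻¹ + y⁻¹) + z⁻¹, equals the sum over all pairs of natural numbers (l,m) with l + m = d of (2d)! · d! / ((l!)³ · (m!)³). (Together with the vanishing of odd constant terms, this says that the classical period of f₂ equals the regularised quantum period of a general (1,1)-divisor in ℙ² × ℙ².) -/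
noncomputable section

open scoped Nat

/-- The Laurent polynomial ring in three variables over `ℚ`:
the group algebra `ℚ[ℤ³]`, where `x^i y^j z^k` corresponds to `(i,j,k)`. -/
abbrev LaurentQ3 : Type := AddMonoidAlgebra ℚ (ℤ × ℤ × ℤ)

/-- The variable `x`. -/
def X : LaurentQ3 := AddMonoidAlgebra.single (1, 0, 0) 1
/-- The variable `y`. -/
def Y : LaurentQ3 := AddMonoidAlgebra.single (0, 1, 0) 1
/-- The variable `z`. -/
def Z : LaurentQ3 := AddMonoidAlgebra.single (0, 0, 1) 1
/-- The inverse variable `x⁻¹`. -/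
def Xinv : LaurentQ3 := AddMonoidAlgebra.single (-1, 0, 0) 1
/-- The inverse variable `y⁻¹`. -/
def Yinv : LaurentQ3 := AddMonoidAlgebra.single (0, -1, 0) 1
/-- The inverse variable `z⁻¹`. -/
def Zinv : LaurentQ3 := AddMonoidAlgebra.single (0, 0, -1) 1

/-- The Laurent polynomial `f_a = z(a + x + xy + y + x⁻¹ + x⁻¹y⁻¹ + y⁻¹) + z⁻¹`. -/
def f (a : ℚ) : LaurentQ3 :=
  Z * (AddMonoidAlgebra.single 0 a + X + X * Y + Y + Xinv + Xinv * Yinv + Yinv) + Zinv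

/-!
Since `2 + x + xy + y + x⁻¹ + x⁻¹y⁻¹ + y⁻¹ = (1 + x)(1 + y)(1 + x⁻¹y⁻¹)`, the polynomial `f 2` is
the sum of `z(1 + x)(1 + y)(1 + x⁻¹y⁻¹)`, of degree `1` in `z`, and `z⁻¹`, of degree `-1`. Hence
only the middle term of the binomial expansion of `f 2 ^ (2d)` contributes to the constant term.
It is `(2d choose d)` times `(1 + x)ᵈ(1 + y)ᵈ(1 + x⁻¹y⁻¹)ᵈ`, in which the monomials picked from the
three factors cancel exactly when they come with equal exponents, so the constant term of this
product is `∑ i, (d choose i)³`.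
-/

section ConstantTerm

open AddMonoidAlgebra Finset

theorem single_mul_single_neg {R A : Type*} [Semiring R] [AddGroup A] (u : A) :
    (single u 1 * single (-u) 1 : AddMonoidAlgebra R A) = 1 := by
  rw [single_mul_single, add_neg_cancel, mul_one, one_def]

section Grading

variable {R M ι : Type*} [CommSemiring R]

theorem coeff_eq_zero_of_mem_gradeBy {deg : M → ι} {i : ι} {p : AddMonoidAlgebra R M} {m : M}
    (hp : p ∈ gradeBy R deg i) (hm : deg m ≠ i) : p.coeff m = 0 := by
  by_contra hpm
  exact hm (hp m (Finsupp.mem_support_iff.mpr hpm))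

theorem coeff_zero_add_pow_two_mul_of_mem_gradeBy [AddCommMonoid M] [AddGroup ι]
    [IsAddTorsionFree ι] (deg : M →+ ι) {i : ι} (hi : i ≠ 0) {p q : AddMonoidAlgebra R M}
    (hp : p ∈ gradeBy R deg i) (hq : q ∈ gradeBy R deg (-i)) (d : ℕ) :
    ((p + q) ^ (2 * d)).coeff 0 = d.centralBinom * ((p * q) ^ d).coeff 0 := by
  have off_middle : ∀ m ∈ range (2 * d + 1), m ≠ d →
      (p ^ m * q ^ (2 * d - m) * ((2 * d).choose m : AddMonoidAlgebra R M)).coeff 0 = 0 := by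
    intro m hm hmd
    have hm_le : m ≤ 2 * d := mem_range_succ_iff.mp hm
    have degree_ne : deg 0 ≠ m • i + (2 * d - m) • -i := by
      have degree_eq : m • i + (2 * d - m) • -i = (2 * (m - d : ℤ)) • i := by
        rw [← natCast_zsmul, ← natCast_zsmul, zsmul_neg, ← neg_zsmul, ← add_zsmul]
        congr 1
        omega
      rw [map_zero, degree_eq, ne_comm, Ne, IsAddTorsionFree.zsmul_eq_zero_iff_left hi]
      omega
    rw [← nsmul_eq_mul', coeff_smul_apply, coeff_eq_zero_of_mem_gradeBy
      (SetLike.mul_mem_graded (SetLike.pow_mem_graded m hp)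
        (SetLike.pow_mem_graded (2 * d - m) hq)) degree_ne, smul_zero]
  have d_mem : d ∈ range (2 * d + 1) := mem_range_succ_iff.mpr (by omega)
  rw [add_pow, coeff_sum, Finsupp.finsetSum_apply, sum_eq_single_of_mem d d_mem off_middle,
    show 2 * d - d = d by omega, ← mul_pow, ← nsmul_eq_mul', coeff_smul_apply, nsmul_eq_mul,
    Nat.centralBinom]

end Grading

section Binomial

variable {R A : Type*} [Semiring R]

theorem one_add_single_pow [AddMonoid A] (u : A) (n : ℕ) :
    (1 + single u 1 : AddMonoidAlgebra R A) ^ n =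
      ∑ i ∈ range (n + 1), single (i • u) (n.choose i : R) := by
  rw [add_comm, (Commute.one_right (single u 1)).add_pow]
  refine sum_congr rfl fun i _ => ?_
  rw [one_pow, mul_one, single_pow, one_pow, ← nsmul_eq_mul', smul_single, nsmul_one]

theorem coeff_one_add_single_pow_mul_one_add_single_pow [AddCommMonoid A] {u v : A}
    (huv : LinearIndependent ℕ ![u, v]) (a b i j : ℕ) :
    ((1 + single u 1) ^ a * (1 + single v 1) ^ b : AddMonoidAlgebra R A).coeff (i • u + j • v) =
      a.choose i * b.choose j := by
  classical
  have exponents_eq_iff (k l : ℕ) : k • u + l • v = i • u + j • v ↔ k = i ∧ l = j :=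
    ⟨LinearIndependent.pair_iffₛ.mp huv k l i j, fun h => by rw [h.1, h.2]⟩
  have sum_choose (n k : ℕ) :
      ∑ l ∈ range (n + 1), (if l = k then (n.choose l : R) else 0) = n.choose k := by
    rw [sum_ite_eq', ite_eq_left_iff, mem_range_succ_iff, not_le]
    exact fun h => by rw [Nat.choose_eq_zero_of_lt h, Nat.cast_zero]
  simp only [one_add_single_pow, sum_mul_sum, single_mul_single, coeff_sum, coeff_single,
    Finsupp.finsetSum_apply, Finsupp.single_apply, exponents_eq_iff, ← ite_zero_mul_ite_zero]
  rw [← sum_mul_sum, sum_choose, sum_choose]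

theorem coeff_zero_one_add_single_pow_mul [AddCommGroup A] {u v : A}
    (huv : LinearIndependent ℕ ![u, v]) (a b c : ℕ) :
    ((1 + single u 1) ^ a * (1 + single v 1) ^ b * (1 + single (-(u + v)) 1) ^ c :
      AddMonoidAlgebra R A).coeff 0 =
      ∑ i ∈ range (c + 1), (a.choose i * b.choose i * c.choose i : R) := by
  rw [one_add_single_pow (-(u + v)), mul_sum, coeff_sum, Finsupp.finsetSum_apply]
  refine sum_congr rfl fun i _ => ?_
  rw [coeff_mul_single_apply, zero_add, smul_neg, neg_neg, smul_add,
    coeff_one_add_single_pow_mul_one_add_single_pow huv]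

end Binomial

section LaurentPolynomial

/-- The degree in `z` of the monomial with exponent vector `(i, j, k)`, i.e. `k`. -/
def zDegree : ℤ × ℤ × ℤ →+ ℤ :=
  (AddMonoidHom.snd ℤ ℤ).comp (AddMonoidHom.snd ℤ (ℤ × ℤ))

/-- The Laurent polynomial `(1 + x)(1 + y)(1 + x⁻¹y⁻¹)`, which is the coefficient of `z` in `f 2`;
its Newton polygon is a hexagon. -/
def hexagon : LaurentQ3 :=
  (1 + X) * (1 + Y) * (1 + Xinv * Yinv)

theorem X_mul_Xinv : X * Xinv = 1 :=
  single_mul_single_neg _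

theorem Y_mul_Yinv : Y * Yinv = 1 :=
  single_mul_single_neg _

theorem Z_mul_Zinv : Z * Zinv = 1 :=
  single_mul_single_neg _

theorem Xinv_mul_Yinv : Xinv * Yinv = single (-((1, 0, 0) + (0, 1, 0))) 1 := by
  simp [Xinv, Yinv, single_mul_single]

theorem f_two_eq : f 2 = Z * hexagon + Zinv := by
  have single_two : (single 0 2 : LaurentQ3) = 2 := rfl
  rw [f, single_two, hexagon]
  linear_combination (-Z * Yinv - Z * Y * Yinv) * X_mul_Xinv + (-Z * Xinv - Z) * Y_mul_Yinv

theorem hexagon_mem_gradeBy_zDegree : hexagon ∈ gradeBy ℚ zDegree 0 := by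
  have one_add_single_mem (v : ℤ × ℤ × ℤ) (hv : zDegree v = 0) :
      1 + single v 1 ∈ gradeBy ℚ zDegree 0 :=
    add_mem (SetLike.one_mem_graded _) (hv ▸ single_mem_gradeBy zDegree v 1)
  rw [hexagon, Xinv_mul_Yinv]
  exact SetLike.mul_mem_graded
    (SetLike.mul_mem_graded (one_add_single_mem _ rfl) (one_add_single_mem _ rfl))
    (one_add_single_mem _ rfl)

theorem coeff_zero_hexagon_pow (d : ℕ) :
    (hexagon ^ d).coeff 0 = ∑ i ∈ range (d + 1), (d.choose i : ℚ) ^ 3 := by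
  have independent : LinearIndependent ℕ ![((1, 0, 0) : ℤ × ℤ × ℤ), (0, 1, 0)] := by
    rw [LinearIndependent.pair_iffₛ]
    simp
  rw [hexagon, mul_pow, mul_pow, Xinv_mul_Yinv, X, Y, coeff_zero_one_add_single_pow_mul independent]
  exact sum_congr rfl fun i _ => by ring

theorem coeff_zero_f_two_pow_two_mul (d : ℕ) :
    (f 2 ^ (2 * d)).coeff 0 = d.centralBinom * (hexagon ^ d).coeff 0 := by
  have hp : Z * hexagon ∈ gradeBy ℚ zDegree 1 :=
    SetLike.mul_mem_graded (single_mem_gradeBy zDegree _ _) hexagon_mem_gradeBy_zDegree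
  have hq : Zinv ∈ gradeBy ℚ zDegree (-1) := single_mem_gradeBy zDegree _ _
  rw [f_two_eq, coeff_zero_add_pow_two_mul_of_mem_gradeBy zDegree one_ne_zero hp hq, mul_right_comm,
    Z_mul_Zinv, one_mul]

end LaurentPolynomial

theorem centralBinom_mul_choose_pow_three {K : Type*} [Field K] [CharZero K] (l m : ℕ) :
    ((l + m).centralBinom * (l + m).choose l ^ 3 : K) =
      ((2 * (l + m))! * (l + m)! : ℕ) / ((l ! : K) ^ 3 * (m ! : K) ^ 3) := by
  rw [Nat.centralBinom, two_mul, Nat.cast_add_choose, Nat.cast_add_choose, Nat.cast_mul]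
  field_simp

end ConstantTerm

/-- The constant term of `f₂ ^ (2d)` equals
`∑_{l+m=d} (2d)! · d! / ((l!)³ · (m!)³)`. -/
theorem constant_term_f_two_even_power (d : ℕ) :
    (f 2 ^ (2 * d)).coeff (0, 0, 0) =
      ∑ p ∈ Finset.HasAntidiagonal.antidiagonal d,
        (((2 * d)! * (d)! : ℕ) : ℚ) / (((p.1)! : ℚ) ^ 3 * ((p.2)! : ℚ) ^ 3) := by
  change (f 2 ^ (2 * d)).coeff 0 = _
  rw [coeff_zero_f_two_pow_two_mul, coeff_zero_hexagon_pow, Finset.mul_sum,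
    ← Finset.Nat.sum_antidiagonal_eq_sum_range_succ_mk
      (f := fun p => (d.centralBinom : ℚ) * (d.choose p.1 : ℚ) ^ 3)]
  refine Finset.sum_congr rfl fun p hp => ?_
  obtain rfl := Finset.HasAntidiagonal.mem_antidiagonal.mp hp
  exact centralBinom_mul_choose_pow_three p.1 p.2

end
end
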